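/- arXiv:2404.13620 — 2 statements merged into one kernel-verified Lean document; each statement's English description precedes it below -/
import Mathlib

section
/- If in addition α₁ ≤ A for a real number A ≥ 1, then α₁(α₁² − 3α₂²)/s³ − μ·α₁/(s·ε₂) ≥ (14/51)·(9/10)³·(1/A³). (Here α₁(α₁² − 3α₂²)/s³ equals Re(1/σ³) for σ = α₁ + iα₂.) -/
/-!
Write `d = α₁² - 3α₂²`. Clearing denominators in `ε₂` shows that the coefficient factors as
`(α₁ d / s³) · (d - s μ²) / (d + s μ²)`. When `|α₂| ≤ r α₁`, we have `d ≥ (1 - 3r²) α₁²` and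
`s ≤ (1 + r²) α₁²`, and each factor increases with `d` and decreases with `s`. The resulting
bound is attained at `|α₂| = r α₁`, `α₁ = A`; the constant `(14 / 51) (9 / 10)³` is its value for
`r = 1 / 3` and `μ = 1 / 2`.
-/

theorem garding_coefficient_eq_mul {K : Type*} [Field K] {μ d s : K} (a : K)
    (hd : d ≠ 0) (hds : d + s * μ ^ 2 ≠ 0) :
    a * d / s ^ 3 - μ * a / (s * ((1 / 2) * (s / μ + μ * s ^ 2 / d))) =
      a * d / s ^ 3 * ((d - s * μ ^ 2) / (d + s * μ ^ 2)) := by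
  have hε : (1 / 2) * (s / μ + μ * s ^ 2 / d) = s * (d + s * μ ^ 2) / (2 * μ * d) := by
    field_simp
  rw [hε]
  field_simp
  ring

section LinearOrderedField

variable {K : Type*} [Field K] [LinearOrder K] [IsStrictOrderedRing K]

theorem sub_div_add_le_sub_div_add {p q p' q' : K} (hpq : 0 < p + q) (hpq' : 0 < p' + q')
    (h : p * q' ≤ p' * q) : (p - q) / (p + q) ≤ (p' - q') / (p' + q') := by
  rw [div_le_div_iff₀ hpq hpq']
  linarith

theorem div_cube_mul_one_div_cube_le {a A d s m M : K} (ha : 0 < a) (haA : a ≤ A)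
    (hm : 0 ≤ m) (hmd : m * a ^ 2 ≤ d) (hs : 0 < s) (hsM : s ≤ M * a ^ 2) :
    m / M ^ 3 * (1 / A ^ 3) ≤ a * d / s ^ 3 := by
  have hd : 0 ≤ d := (mul_nonneg hm (sq_nonneg a)).trans hmd
  have hM : 0 < M := pos_of_mul_pos_left (hs.trans_le hsM) (sq_nonneg a)
  calc m / M ^ 3 * (1 / A ^ 3) ≤ m / M ^ 3 * (1 / a ^ 3) := by gcongr
    _ = a * (m * a ^ 2) / (M * a ^ 2) ^ 3 := by field_simp
    _ ≤ a * d / s ^ 3 := by gcongr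

theorem garding_coefficient_lower_bound_two_general (μ α₁ α₂ s ε₂ A r : K) (hμ : μ ≠ 0)
    (hα₁ : 0 < α₁) (hα₂ : |α₂| ≤ r * α₁) (hμr : (1 + r ^ 2) * μ ^ 2 ≤ 1 - 3 * r ^ 2)
    (hs : s = α₁ ^ 2 + α₂ ^ 2)
    (hε₂ : ε₂ = (1 / 2) * (s / μ + μ * s ^ 2 / (α₁ ^ 2 - 3 * α₂ ^ 2)))
    (hα₁A : α₁ ≤ A) :
    (1 - 3 * r ^ 2) / (1 + r ^ 2) ^ 3 * (1 / A ^ 3) *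
        ((1 - 3 * r ^ 2 - (1 + r ^ 2) * μ ^ 2) / (1 - 3 * r ^ 2 + (1 + r ^ 2) * μ ^ 2)) ≤
      α₁ * (α₁ ^ 2 - 3 * α₂ ^ 2) / s ^ 3 - μ * α₁ / (s * ε₂) := by
  have hα₂_sq : α₂ ^ 2 ≤ r ^ 2 * α₁ ^ 2 := by
    rw [← sq_abs α₂, ← mul_pow]
    gcongr
  have hs_pos : 0 < s := by rw [hs]; positivity
  have hs_le : s ≤ (1 + r ^ 2) * α₁ ^ 2 := by linarith
  have hm_pos : 0 < 1 - 3 * r ^ 2 := lt_of_lt_of_le (by positivity) hμr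
  subst hε₂
  set d := α₁ ^ 2 - 3 * α₂ ^ 2
  have hd_ge : (1 - 3 * r ^ 2) * α₁ ^ 2 ≤ d := by linarith
  have hd_pos : 0 < d := lt_of_lt_of_le (by positivity) hd_ge
  have hcross : (1 - 3 * r ^ 2) * (s * μ ^ 2) ≤ d * ((1 + r ^ 2) * μ ^ 2) := calc
    _ ≤ (1 - 3 * r ^ 2) * ((1 + r ^ 2) * α₁ ^ 2 * μ ^ 2) := by gcongr
    _ = (1 - 3 * r ^ 2) * α₁ ^ 2 * ((1 + r ^ 2) * μ ^ 2) := by ring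
    _ ≤ d * ((1 + r ^ 2) * μ ^ 2) := by gcongr
  rw [garding_coefficient_eq_mul α₁ hd_pos.ne' (by positivity)]
  exact mul_le_mul (div_cube_mul_one_div_cube_le hα₁ hα₁A hm_pos.le hd_ge hs_pos hs_le)
    (sub_div_add_le_sub_div_add (by positivity) (by positivity) hcross)
    (div_nonneg (sub_nonneg.2 hμr) (by positivity)) (by positivity)

end LinearOrderedField

/-- With `μ = 1/2`, `α₁ ≥ 1`, `0 ≤ α₂ ≤ α₁/3`, `s = α₁² + α₂²`,
`ε₂ = (1/2)(s/μ + μ s²/(α₁² − 3α₂²))`, and additionally `α₁ ≤ A` with `A ≥ 1`: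
`α₁(α₁² − 3α₂²)/s³ − μ α₁/(s ε₂) ≥ (14/51)(9/10)³(1/A³)`. -/
theorem garding_coefficient_lower_bound_two
    (μ α₁ α₂ s ε₂ A : ℝ) (hμ : μ = 1 / 2) (hα₁ : 1 ≤ α₁)
    (hα₂0 : 0 ≤ α₂) (hα₂ : α₂ ≤ α₁ / 3)
    (hs : s = α₁ ^ 2 + α₂ ^ 2)
    (hε₂ : ε₂ = (1 / 2) * (s / μ + μ * s ^ 2 / (α₁ ^ 2 - 3 * α₂ ^ 2)))
    (hA : 1 ≤ A) (hα₁A : α₁ ≤ A) :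
    (14 / 51) * (9 / 10) ^ 3 * (1 / A ^ 3) ≤
      α₁ * (α₁ ^ 2 - 3 * α₂ ^ 2) / s ^ 3 - μ * α₁ / (s * ε₂) := by
  have hα₂_abs : |α₂| ≤ 1 / 3 * α₁ := by rw [abs_of_nonneg hα₂0]; linarith
  refine le_of_eq_of_le ?_ (garding_coefficient_lower_bound_two_general μ α₁ α₂ s ε₂ A (1 / 3)
    (by simp [hμ]) (by linarith) hα₂_abs (by norm_num [hμ]) hs hε₂ hα₁A)
  rw [hμ]
  ring
end

section
/- Define f : ℝ → ℝ by f(t) = 2e^{2t} − e^{4t} + 4t²e^{2t} − 1. Then f(t) < 0 for every real t ≠ 0 (and f(0) = 0). In particular, for any h > 0 and any nonzero real α, the quantity Λ(α) = 2e^{2αh} − e^{4αh} + 4α²h²e^{2αh} − 1 is nonzero. -/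
/-!
Writing `e^{2t} - 1 = 2 e^t sinh t`, the determinant becomes
`(2 t e^t)² - (e^{2t} - 1)² = 4 e^{2t} (t² - sinh² t)`, whose sign is governed by `|t| ≤ |sinh t|`,
with equality only at `t = 0`.
-/

open Real

theorem sq_lt_sinh_sq_iff {t : ℝ} : t ^ 2 < sinh t ^ 2 ↔ t ≠ 0 := by
  rw [sq_lt_sq, abs_sinh, self_lt_sinh_iff, abs_pos]

theorem two_mul_exp_mul_sinh (t : ℝ) : 2 * exp t * sinh t = exp (2 * t) - 1 := by
  calc 2 * exp t * sinh t = exp t * exp t - exp t * exp (-t) := by rw [sinh_eq]; ring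
    _ = exp (2 * t) - 1 := by rw [← exp_add, ← exp_add, ← two_mul, add_neg_cancel, exp_zero]

/-- The determinant `Λ_n` of the `4 × 4` system for the Fourier coefficients of the biharmonic
boundary value problem, as a function of `t = α_n h`. -/
noncomputable def biharmonicDet (t : ℝ) : ℝ :=
  2 * exp (2 * t) - exp (4 * t) + 4 * t ^ 2 * exp (2 * t) - 1

theorem biharmonicDet_eq (t : ℝ) :
    biharmonicDet t = 4 * exp (2 * t) * (t ^ 2 - sinh t ^ 2) := by
  have exp_two : exp (2 * t) = exp t ^ 2 := mod_cast exp_nat_mul t 2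
  have exp_four : exp (4 * t) = exp (2 * t) ^ 2 := by
    rw [← exp_nat_mul]
    ring_nf
  calc biharmonicDet t = 4 * t ^ 2 * exp (2 * t) - (exp (2 * t) - 1) ^ 2 := by
        rw [biharmonicDet, exp_four]
        ring
    _ = 4 * t ^ 2 * exp (2 * t) - (2 * exp t * sinh t) ^ 2 := by rw [two_mul_exp_mul_sinh]
    _ = 4 * exp (2 * t) * (t ^ 2 - sinh t ^ 2) := by
        rw [exp_two]
        ring

theorem biharmonicDet_zero : biharmonicDet 0 = 0 := by
  simp [biharmonicDet_eq]

theorem biharmonicDet_neg_iff {t : ℝ} : biharmonicDet t < 0 ↔ t ≠ 0 := by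
  have factor_pos : 0 < 4 * exp (2 * t) := by positivity
  rw [biharmonicDet_eq, ← smul_eq_mul, smul_neg_iff_of_pos_left factor_pos,
    sub_neg, sq_lt_sinh_sq_iff]

/-- The determinant-type function `f(t) = 2e^{2t} − e^{4t} + 4t²e^{2t} − 1` vanishes at
`t = 0` and is negative for every `t ≠ 0`; in particular, for any `h > 0` and nonzero
real `α`, the quantity `Λ(α) = 2e^{2αh} − e^{4αh} + 4α²h²e^{2αh} − 1` is nonzero. -/
theorem determinant_function_negative
    (f : ℝ → ℝ)
    (hf : f = fun t => 2 * Real.exp (2 * t) - Real.exp (4 * t)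
      + 4 * t ^ 2 * Real.exp (2 * t) - 1) :
    (∀ t : ℝ, t ≠ 0 → f t < 0) ∧ f 0 = 0 ∧
    (∀ h α : ℝ, 0 < h → α ≠ 0 →
      2 * Real.exp (2 * α * h) - Real.exp (4 * α * h)
        + 4 * α ^ 2 * h ^ 2 * Real.exp (2 * α * h) - 1 ≠ 0) := by
  obtain rfl : f = biharmonicDet := hf
  refine ⟨fun t ht => biharmonicDet_neg_iff.2 ht, biharmonicDet_zero, fun h α hh hα => ?_⟩
  have det_ne_zero : biharmonicDet (α * h) ≠ 0 :=
    (biharmonicDet_neg_iff.2 (mul_ne_zero hα hh.ne')).ne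
  simpa only [biharmonicDet, mul_pow, mul_assoc] using det_ne_zero
end
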